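/- Let A be a circular m×n matrix and N ⊂ [n] a nonempty set of columns. Then the minor of A obtained by deletion of N — the submatrix of A obtained by removing all columns indexed by N and all rows having an entry equal to 1 in some column indexed by N — is an interval matrix: its columns can be linearly ordered so that every remaining row is the incidence vector of a set of consecutive columns in that order. -/

import Mathlib

namespace CircPaper

/-- The circular interval `[a,b]_n` in `ZMod n`:
`{a + t : 0 ≤ t ≤ b - a}`, where `b - a` is the least nonnegative residue. -/
def cInt (n : ℕ) (a b : ZMod n) : Set (ZMod n) :=
  {x | ∃ t : ℕ, t ≤ (b - a).val ∧ x = a + (t : ZMod n)}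

/-- A circular 0,1-matrix of order `m × n`, described by the endpoints `lo i ≠ up i`
of the circular interval `[lo i, up i]_n` whose incidence vector is row `i`.
It has no dominating rows and no zero columns (rows are nonempty intervals, so there
are no zero rows). -/
structure CircularMatrix (m n : ℕ) where
  lo : Fin m → ZMod n
  up : Fin m → ZMod n
  ne : ∀ i, lo i ≠ up i
  noDom : ∀ i j, i ≠ j → ¬ cInt n (lo j) (up j) ⊆ cInt n (lo i) (up i)
  noZeroCol : ∀ c : ZMod n, ∃ i, c ∈ cInt n (lo i) (up i)

variable {m n : ℕ}

/-- The support of row `i` of `A`. -/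
def CircularMatrix.row (A : CircularMatrix m n) (i : Fin m) : Set (ZMod n) :=
  cInt n (A.lo i) (A.up i)

/-- The rows surviving in the contraction minor `A/N`: rows that do not dominate
another row after the columns in `N` have been removed. -/
def CircularMatrix.minorRows (A : CircularMatrix m n) (N : Set (ZMod n)) : Set (Fin m) :=
  {i | ¬ ∃ j, j ≠ i ∧ A.row j \ N ⊆ A.row i \ N}

/-- `A/N ≈ C_s^p`: the contraction minor `A/N` is isomorphic, via a bijection `ρ` of its
rows and a bijection `σ` of its columns, to the `s × s` circulant matrix `C_s^p`, whose
row `r` is the incidence vector of the circular interval `[r, r + p)_s`. -/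
def ContractIsoCirculant (A : CircularMatrix m n) (N : Set (ZMod n)) (s p : ℕ) : Prop :=
  ∃ (ρ : ↥(A.minorRows N) ≃ ZMod s) (σ : ↥(Nᶜ) ≃ ZMod s),
    ∀ (i : ↥(A.minorRows N)) (c : ↥(Nᶜ)),
      (c : ZMod n) ∈ A.row i.1 ↔ (σ c - ρ i).val < p

/-- Kinds of arcs of the digraph `F(A)`: one row arc `(lo i - 1, up i)` for each row `i`
of `A`; a forward short arc `(j-1, j)` and a reverse short arc `(j, j-1)` for every
vertex `j`. -/
inductive ArcKind (m : ℕ) where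
  | row (i : Fin m)
  | fwd
  | bwd
  deriving DecidableEq

/-- Whether an arc kind is a row arc. -/
def ArcKind.isRow {m : ℕ} : ArcKind m → Bool
  | .row _ => true
  | _ => false

/-- A directed circuit in the digraph `F(A)`: a cyclic sequence `vert 0, vert 1, …`
of `len` pairwise distinct vertices of `[n]`, together with, for each `t`, the kind
of the arc of `F(A)` joining `vert t` to `vert (t+1)`. -/
structure Circuit {m n : ℕ} (A : CircularMatrix m n) where
  len : ℕ
  pos : 0 < len
  vert : ZMod len → ZMod n
  inj : Function.Injective vert
  kind : ZMod len → ArcKind m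
  step_row : ∀ t i, kind t = .row i → vert t = A.lo i - 1 ∧ vert (t + 1) = A.up i
  step_fwd : ∀ t, kind t = .fwd → vert (t + 1) = vert t + 1
  step_bwd : ∀ t, kind t = .bwd → vert (t + 1) = vert t - 1

/-- The length of an arc of `F(A)`: `v - u` for a row arc `(u, v) = (lo i - 1, up i)`,
`1` for a forward short arc and `-1` for a reverse short arc. -/
def CircularMatrix.arcLen (A : CircularMatrix m n) : ArcKind m → ℤ
  | .row i => ((A.up i - (A.lo i - 1)).val : ℤ)
  | .fwd => 1
  | .bwd => -1

/-- The sum of the lengths of the arcs of the circuit `Γ`. -/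
def Circuit.windSum {A : CircularMatrix m n} (Γ : Circuit A) : ℤ :=
  ∑ t ∈ Finset.range Γ.len, A.arcLen (Γ.kind (t : ZMod Γ.len))

/-- `Γ` has winding number `p`, i.e. the sum of the lengths of its arcs is `p * n`. -/
def Circuit.HasWinding {A : CircularMatrix m n} (Γ : Circuit A) (p : ℕ) : Prop :=
  Γ.windSum = (p : ℤ) * n

/-- The number of row arcs of the circuit `Γ`. -/
def Circuit.rowArcs {A : CircularMatrix m n} (Γ : Circuit A) : ℕ :=
  ((Finset.range Γ.len).filter (fun (t : ℕ) => (Γ.kind (t : ZMod Γ.len)).isRow = true)).card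

/-- The vertex set of the circuit `Γ`. -/
def Circuit.verts {A : CircularMatrix m n} (Γ : Circuit A) : Set (ZMod n) :=
  Set.range Γ.vert

/-- The circles of `Γ`: heads of forward short arcs of `Γ`. -/
def Circuit.circles {A : CircularMatrix m n} (Γ : Circuit A) : Set (ZMod n) :=
  {j | ∃ t, Γ.kind t = .fwd ∧ Γ.vert (t + 1) = j}

/-- The crosses of `Γ`: tails of reverse short arcs of `Γ`. -/
def Circuit.crosses {A : CircularMatrix m n} (Γ : Circuit A) : Set (ZMod n) :=
  {j | ∃ t, Γ.kind t = .bwd ∧ Γ.vert t = j}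

/-- The bullets of `Γ`: the vertices of `[n]` that are neither circles nor crosses. -/
def Circuit.bullets {A : CircularMatrix m n} (Γ : Circuit A) : Set (ZMod n) :=
  (Γ.circles ∪ Γ.crosses)ᶜ

/-- The essential bullets of `Γ`: the bullets that are vertices of `Γ`. -/
def Circuit.essBullets {A : CircularMatrix m n} (Γ : Circuit A) : Set (ZMod n) :=
  Γ.verts ∩ Γ.bullets

/-- The arc `(x, y)` jumps over `j` iff `j ∈ (x, y]_n`. -/
def jumps (n : ℕ) (x y j : ZMod n) : Prop := j ∈ cInt n x y ∧ j ≠ x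

/-- The set of vertices over which the row arc `(lo i - 1, up i)` of row `i` jumps. -/
def CircularMatrix.jumpSet (A : CircularMatrix m n) (i : Fin m) : Set (ZMod n) :=
  {j | jumps n (A.lo i - 1) (A.up i) j}

/-- The row arc of row `i` of `A` is a bad arc w.r.t. the circuit `Γ` with winding
number `p`: it jumps over exactly `p - 1` essential bullets of `Γ`. -/
def Circuit.BadArc {A : CircularMatrix m n} (Γ : Circuit A) (p : ℕ) (i : Fin m) : Prop :=
  (Γ.essBullets ∩ A.jumpSet i).ncard = p - 1

/-- A family of pairwise vertex-disjoint circuits. -/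
def DisjFamily {A : CircularMatrix m n} {a : ℕ} (Γ : Fin a → Circuit A) : Prop :=
  ∀ i j, i ≠ j → Disjoint (Γ i).verts (Γ j).verts

/-- The essential bullets of a family of circuits: the union of the essential bullets
of its members. -/
def famEssBullets {A : CircularMatrix m n} {a : ℕ} (Γ : Fin a → Circuit A) : Set (ZMod n) :=
  ⋃ i, (Γ i).essBullets

theorem mem_cInt_iff_aux {n : ℕ} (hn : 0 < n) (a b z x : ZMod n) (hz : z ∉ cInt n a b) :
    x ∈ cInt n a b ↔ (a - z).val ≤ (x - z).val ∧ (x - z).val ≤ (a - z).val + (b - a).val := by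
  haveI : NeZero n := ⟨hn.ne'⟩
  have hl : (a - z).val < n := ZMod.val_lt _
  have hlc : (((a - z).val : ℕ) : ZMod n) = a - z := ZMod.natCast_zmod_val _
  have hlt : (a - z).val + (b - a).val < n := by
    by_contra hcon
    apply hz
    refine ⟨n - (a - z).val, by omega, ?_⟩
    rw [Nat.cast_sub hl.le, hlc, ZMod.natCast_self]
    ring
  constructor
  · rintro ⟨t, ht, rfl⟩
    have h : (a + (t : ZMod n) - z).val = (a - z).val + t := by
      have h1 : a + (t : ZMod n) - z = (((a - z).val + t : ℕ) : ZMod n) := by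
        rw [Nat.cast_add, hlc]
        ring
      rw [h1, ZMod.val_cast_of_lt (by omega)]
    omega
  · rintro ⟨h1, h2⟩
    refine ⟨(x - z).val - (a - z).val, by omega, ?_⟩
    rw [Nat.cast_sub h1, hlc, ZMod.natCast_zmod_val]
    ring

/-- deletion minors of circular matrices are interval matrices.
Let `A` be a circular `m × n` matrix and `N ⊂ [n]` a nonempty set of columns.  The minor
obtained by deletion of `N` (remove the columns in `N` and all rows with a `1` in some
column of `N`) is an interval matrix: the remaining columns can be linearly ordered
(by an injection `σ` into `ℕ`) so that every remaining row is the incidence vector of a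
set of consecutive columns in that order. -/
theorem statement_18 {m n : ℕ} (hn : 0 < n) (A : CircularMatrix m n)
    (N : Set (ZMod n)) (hN : N.Nonempty) :
    ∃ σ : ↥(Nᶜ) → ℕ, Function.Injective σ ∧
      ∀ i : Fin m, A.row i ∩ N = ∅ →
        ∀ c₁ c₂ c₃ : ↥(Nᶜ), σ c₁ ≤ σ c₂ → σ c₂ ≤ σ c₃ →
          (c₁ : ZMod n) ∈ A.row i → (c₃ : ZMod n) ∈ A.row i → (c₂ : ZMod n) ∈ A.row i := by
  haveI : NeZero n := ⟨hn.ne'⟩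
  obtain ⟨z, hz⟩ := hN
  refine ⟨fun c => ((c : ZMod n) - z).val, ?_, ?_⟩
  · intro c d h
    exact Subtype.ext (sub_left_injective (ZMod.val_injective n h))
  · intro i hi c₁ c₂ c₃ h12 h23 h1 h3
    have hzi : z ∉ cInt n (A.lo i) (A.up i) := fun h => by
      have : z ∈ A.row i ∩ N := ⟨h, hz⟩
      rw [hi] at this
      exact this
    have k1 := (mem_cInt_iff_aux hn _ _ z _ hzi).1 h1
    have k3 := (mem_cInt_iff_aux hn _ _ z _ hzi).1 h3
    exact (mem_cInt_iff_aux hn _ _ z _ hzi).2 ⟨k1.1.trans h12, h23.trans k3.2⟩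

end CircPaper
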